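/- Let M be a Sidon set in F_2^t with |M| > s_max(t−1). Then (a) the 4-sums 4Σ(M) equal all of F_2^t, and (b) dim span(M) = dim span(2Σ*(M)) = t. -/

import Mathlib

/-- A subset `M` of `𝔽₂ᵗ` is Sidon if `m₁+m₂ ≠ m₃+m₄` for pairwise distinct elements. -/
def IsSidon {t : ℕ} (M : Finset (Fin t → ZMod 2)) : Prop :=
  ∀ m₁ ∈ M, ∀ m₂ ∈ M, ∀ m₃ ∈ M, ∀ m₄ ∈ M,
    (m₁ ≠ m₂ ∧ m₁ ≠ m₃ ∧ m₁ ≠ m₄ ∧ m₂ ≠ m₃ ∧ m₂ ≠ m₄ ∧ m₃ ≠ m₄) →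
    m₁ + m₂ ≠ m₃ + m₄

/-- `M` is sum-free if `m₁+m₂ ≠ m₃` for all `m₁,m₂,m₃ ∈ M`. -/
def IsSumFree {t : ℕ} (M : Finset (Fin t → ZMod 2)) : Prop :=
  ∀ m₁ ∈ M, ∀ m₂ ∈ M, ∀ m₃ ∈ M, m₁ + m₂ ≠ m₃

/-- A maximal Sidon set. -/
def IsMaximalSidon {t : ℕ} (M : Finset (Fin t → ZMod 2)) : Prop :=
  IsSidon M ∧ ∀ S : Finset (Fin t → ZMod 2), IsSidon S → M ⊆ S → S = M

/-- Maximum size of a Sidon set in `𝔽₂ᵗ`. -/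
noncomputable def sMax (t : ℕ) : ℕ :=
  sSup {n : ℕ | ∃ M : Finset (Fin t → ZMod 2), IsSidon M ∧ M.card = n}

/-- 2-sums of `M`. -/
def twoSums {t : ℕ} (M : Finset (Fin t → ZMod 2)) : Finset (Fin t → ZMod 2) :=
  (M ×ˢ M).image fun p => p.1 + p.2

/-- 2-star-sums of `M` (sums of two distinct elements). -/
def twoStarSums {t : ℕ} (M : Finset (Fin t → ZMod 2)) : Finset (Fin t → ZMod 2) :=
  ((M ×ˢ M).filter fun p => p.1 ≠ p.2).image fun p => p.1 + p.2

/-- 3-sums of `M`. -/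
def threeSums {t : ℕ} (M : Finset (Fin t → ZMod 2)) : Finset (Fin t → ZMod 2) :=
  ((M ×ˢ M) ×ˢ M).image fun p => p.1.1 + p.1.2 + p.2

/-- 3-star-sums of `M` (sums of three pairwise distinct elements). -/
def threeStarSums {t : ℕ} (M : Finset (Fin t → ZMod 2)) : Finset (Fin t → ZMod 2) :=
  (((M ×ˢ M) ×ˢ M).filter fun p => p.1.1 ≠ p.1.2 ∧ p.1.1 ≠ p.2 ∧ p.1.2 ≠ p.2).image
    fun p => p.1.1 + p.1.2 + p.2

/-- 4-sums of `M`. -/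
def fourSums {t : ℕ} (M : Finset (Fin t → ZMod 2)) : Finset (Fin t → ZMod 2) :=
  (((M ×ˢ M) ×ˢ M) ×ˢ M).image fun p => p.1.1.1 + p.1.1.2 + p.1.2 + p.2

/-!
If a nonzero `x` were not a 4-sum of `M`, then projecting `𝔽₂ᵗ` along the line `⟨x⟩` would keep the
2-sums of `M` apart, since two 2-sums with the same image differ by `0` or `x` and their difference
is a 4-sum. The image of `M` would then be a Sidon set in `𝔽₂ᵗ⁻¹` of the same size as `M`, which
contradicts `|M| > s_max(t-1)`. Part (b) follows because `4Σ(M)` lies in the span of `2Σ*(M)`.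
-/

section LinearAlgebra

variable {K V W : Type*} [DivisionRing K] [AddCommGroup V] [Module K V] [Module.Finite K V]
  [AddCommGroup W] [Module K W] [Module.Finite K W]

open Module in
theorem exists_linearMap_ker_eq (U : Submodule K V) (hU : finrank K V ≤ finrank K W + finrank K U) :
    ∃ f : V →ₗ[K] W, f.ker = U := by
  have hrank : finrank K (V ⧸ U) ≤ finrank K W := by
    have := U.finrank_quotient_add_finrank
    omega
  obtain ⟨g, hg⟩ := finrank_le_iff_exists_linearMap.mp hrank
  exact ⟨g ∘ₗ U.mkQ, by
    rw [LinearMap.ker_comp_of_ker_eq_bot _ (LinearMap.ker_eq_bot.mpr hg), U.ker_mkQ]⟩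

end LinearAlgebra

section SumSets

variable {t : ℕ} {M : Finset (Fin t → ZMod 2)} {x : Fin t → ZMod 2}

theorem mem_twoSums : x ∈ twoSums M ↔ ∃ a ∈ M, ∃ b ∈ M, a + b = x := by
  simp only [twoSums, Finset.mem_image, Finset.mem_product, Prod.exists]
  tauto

theorem mem_twoStarSums : x ∈ twoStarSums M ↔ ∃ a ∈ M, ∃ b ∈ M, a ≠ b ∧ a + b = x := by
  simp only [twoStarSums, Finset.mem_image, Finset.mem_filter, Finset.mem_product, Prod.exists]
  tauto

theorem mem_fourSums : x ∈ fourSums M ↔ ∃ p ∈ twoSums M, ∃ q ∈ twoSums M, p + q = x := by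
  simp only [fourSums, Finset.mem_image, Finset.mem_product, Prod.exists, mem_twoSums]
  constructor
  · rintro ⟨a, b, c, d, ⟨⟨⟨ha, hb⟩, hc⟩, hd⟩, rfl⟩
    exact ⟨_, ⟨a, ha, b, hb, rfl⟩, _, ⟨c, hc, d, hd, rfl⟩, (add_assoc _ _ _).symm⟩
  · rintro ⟨_, ⟨a, ha, b, hb, rfl⟩, _, ⟨c, hc, d, hd, rfl⟩, rfl⟩
    exact ⟨a, b, c, d, ⟨⟨⟨ha, hb⟩, hc⟩, hd⟩, add_assoc _ _ _⟩

theorem sub_mem_fourSums {p q : Fin t → ZMod 2} (hp : p ∈ twoSums M) (hq : q ∈ twoSums M) :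
    p - q ∈ fourSums M :=
  mem_fourSums.mpr ⟨p, hp, q, hq, (ZModModule.sub_eq_add p q).symm⟩

theorem zero_mem_fourSums (hM : M.Nonempty) : 0 ∈ fourSums M := by
  obtain ⟨m, hm⟩ := hM
  have hmm : m + m ∈ twoSums M := mem_twoSums.mpr ⟨m, hm, m, hm, rfl⟩
  exact sub_self (m + m) ▸ sub_mem_fourSums hmm hmm

theorem mem_span_twoStarSums_of_mem_twoSums (hx : x ∈ twoSums M) :
    x ∈ Submodule.span (ZMod 2) (twoStarSums M : Set (Fin t → ZMod 2)) := by
  obtain ⟨a, ha, b, hb, rfl⟩ := mem_twoSums.mp hx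
  obtain rfl | hab := eq_or_ne a b
  · exact ZModModule.add_self a ▸ Submodule.zero_mem _
  · exact Submodule.subset_span (mem_twoStarSums.mpr ⟨a, ha, b, hb, hab, rfl⟩)

theorem mem_span_twoStarSums_of_mem_fourSums (hx : x ∈ fourSums M) :
    x ∈ Submodule.span (ZMod 2) (twoStarSums M : Set (Fin t → ZMod 2)) := by
  obtain ⟨p, hp, q, hq, rfl⟩ := mem_fourSums.mp hx
  exact add_mem (mem_span_twoStarSums_of_mem_twoSums hp) (mem_span_twoStarSums_of_mem_twoSums hq)

theorem span_twoStarSums_le_span :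
    Submodule.span (ZMod 2) (twoStarSums M : Set (Fin t → ZMod 2)) ≤
      Submodule.span (ZMod 2) (M : Set (Fin t → ZMod 2)) := by
  refine Submodule.span_le.mpr fun x hx => ?_
  obtain ⟨a, ha, b, hb, -, rfl⟩ := mem_twoStarSums.mp hx
  exact add_mem (Submodule.subset_span ha) (Submodule.subset_span hb)

end SumSets

section Projection

variable {s t : ℕ} {M : Finset (Fin t → ZMod 2)} {f : (Fin t → ZMod 2) →ₗ[ZMod 2] (Fin s → ZMod 2)}

theorem injOn_of_injOn_twoSums (hf : Set.InjOn f (twoSums M)) : Set.InjOn f M := by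
  intro a ha b hb hab
  have haa_mem : a + a ∈ twoSums M := mem_twoSums.mpr ⟨a, ha, a, ha, rfl⟩
  have hab_mem : a + b ∈ twoSums M := mem_twoSums.mpr ⟨a, ha, b, hb, rfl⟩
  exact add_left_cancel (hf haa_mem hab_mem (by rw [map_add, map_add, hab]))

theorem injOn_twoSums_of_forall_mem_fourSums (hf : ∀ x ∈ fourSums M, f x = 0 → x = 0) :
    Set.InjOn f (twoSums M) := by
  intro p hp q hq hpq
  exact sub_eq_zero.mp (hf _ (sub_mem_fourSums hp hq) (by rw [map_sub, hpq, sub_self]))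

theorem IsSidon.image (hM : IsSidon M) (hf : Set.InjOn f (twoSums M)) : IsSidon (M.image f) := by
  simp only [IsSidon, Finset.forall_mem_image]
  rintro a ha b hb c hc d hd ⟨hab, hac, had, hbc, hbd, hcd⟩ hsum
  have hsum' : a + b = c + d :=
    hf (mem_twoSums.mpr ⟨a, ha, b, hb, rfl⟩) (mem_twoSums.mpr ⟨c, hc, d, hd, rfl⟩)
      (by rw [map_add, map_add, hsum])
  exact hM a ha b hb c hc d hd ⟨ne_of_apply_ne f hab, ne_of_apply_ne f hac, ne_of_apply_ne f had,
    ne_of_apply_ne f hbc, ne_of_apply_ne f hbd, ne_of_apply_ne f hcd⟩ hsum'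

theorem IsSidon.card_le_sMax (hM : IsSidon M) : M.card ≤ sMax t := by
  refine le_csSup ⟨Fintype.card (Fin t → ZMod 2), ?_⟩ ⟨M, hM, rfl⟩
  rintro _ ⟨S, -, rfl⟩
  exact S.card_le_univ

theorem IsSidon.card_le_sMax_of_injOn_twoSums (hM : IsSidon M) (hf : Set.InjOn f (twoSums M)) :
    M.card ≤ sMax s :=
  calc M.card = (M.image f).card := (Finset.card_image_of_injOn (injOn_of_injOn_twoSums hf)).symm
    _ ≤ sMax s := (hM.image hf).card_le_sMax

theorem IsSidon.exists_mem_fourSums_mem_ne_zero (hM : IsSidon M) (hcard : sMax s < M.card)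
    (U : Submodule (ZMod 2) (Fin t → ZMod 2)) (hU : t ≤ s + Module.finrank (ZMod 2) U) :
    ∃ x ∈ fourSums M, x ∈ U ∧ x ≠ 0 := by
  by_contra! hU_fourSums
  obtain ⟨f, rfl⟩ : ∃ f : (Fin t → ZMod 2) →ₗ[ZMod 2] (Fin s → ZMod 2), f.ker = U :=
    exists_linearMap_ker_eq U (by simpa only [Module.finrank_fin_fun] using hU)
  exact hcard.not_ge
    (hM.card_le_sMax_of_injOn_twoSums (injOn_twoSums_of_forall_mem_fourSums hU_fourSums))

theorem IsSidon.fourSums_eq_univ (hM : IsSidon M) (hcard : sMax (t - 1) < M.card) :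
    fourSums M = Finset.univ := by
  refine Finset.eq_univ_of_forall fun x => ?_
  obtain rfl | hx := eq_or_ne x 0
  · exact zero_mem_fourSums (Finset.card_pos.mp (Nat.zero_lt_of_lt hcard))
  obtain ⟨y, hy, hyx, hy0⟩ := hM.exists_mem_fourSums_mem_ne_zero hcard
    (Submodule.span (ZMod 2) {x}) (by rw [finrank_span_singleton hx]; omega)
  obtain ⟨c, rfl⟩ := Submodule.mem_span_singleton.mp hyx
  have hc0 : c ≠ 0 := left_ne_zero_of_smul hy0
  have hc : c = 1 := Fin.eq_one_of_ne_zero c hc0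
  rwa [hc, one_smul] at hy

end Projection

theorem large_sidon_set_properties {t : ℕ} (M : Finset (Fin t → ZMod 2))
    (hM : IsSidon M) (hcard : sMax (t - 1) < M.card) :
    fourSums M = Finset.univ ∧
    Module.finrank (ZMod 2)
      (Submodule.span (ZMod 2) (M : Set (Fin t → ZMod 2))) = t ∧
    Module.finrank (ZMod 2)
      (Submodule.span (ZMod 2) ((twoStarSums M : Set (Fin t → ZMod 2)))) = t := by
  have hfour : fourSums M = Finset.univ := hM.fourSums_eq_univ hcard
  have hstar : Submodule.span (ZMod 2) (twoStarSums M : Set (Fin t → ZMod 2)) = ⊤ :=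
    Submodule.eq_top_iff'.mpr fun x =>
      mem_span_twoStarSums_of_mem_fourSums (hfour ▸ Finset.mem_univ x)
  have hspan : Submodule.span (ZMod 2) (M : Set (Fin t → ZMod 2)) = ⊤ :=
    top_unique (hstar ▸ span_twoStarSums_le_span)
  refine ⟨hfour, ?_, ?_⟩
  · rw [hspan, finrank_top, Module.finrank_fin_fun]
  · rw [hstar, finrank_top, Module.finrank_fin_fun]
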